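/- (Kellogg-type example: momentum equation.) Let U ⊆ ℝ^d be open, B : U → ℝ^d be C³ with ΔB = 0 on U, and let ν > 0 be a real constant. Define u(x) := ∇(y ↦ ⟨y, B(y)⟩)(x) − 2B(x) and p(x) := ν·(∇·B)(x) on U. Then −∇·(ν ε(u)) + ∇p = 0 on U, where ε(u) := (∇u + (∇u)^T)/2 with ∇u the Jacobian matrix of u, and ∇·(ν ε(u)) denotes the vector field whose i-th component is the divergence of the i-th row of ν ε(u). -/

import Mathlib

/-!
For every `C²` field `u`, commuting derivatives gives `2 ∇·ε(u) = Δu + ∇(∇·u)`. For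
`u = ∇(x·B) − 2B` the product rule `Δ(x·B) = 2 ∇·B + x·ΔB` yields `∇·u = x·ΔB` and
`Δu = ∇(2 ∇·B + x·ΔB) − 2ΔB`, so that `∇·ε(u) = ∇(∇·B) + Σ_k x_k ∇ΔB_k` for every `C³` field `B`.
The pressure `ν ∇·B` balances the first term, and the second one vanishes when `B` is harmonic.
-/

noncomputable section

/-- Partial derivative of a scalar field in the `k`-th coordinate direction. -/
def pd {d : ℕ} (f : (Fin d → ℝ) → ℝ) (x : Fin d → ℝ) (k : Fin d) : ℝ :=
  fderiv ℝ f x (Pi.single k 1)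

/-- Laplacian `Δf = Σ_k ∂²f/∂x_k²` of a scalar field. -/
def lap {d : ℕ} (f : (Fin d → ℝ) → ℝ) (x : Fin d → ℝ) : ℝ :=
  ∑ k, pd (fun y => pd f y k) x k

/-- The Neuber-type velocity `u = ∇(x·B) − 2B`. -/
def neuber {d : ℕ} (B : (Fin d → ℝ) → Fin d → ℝ) (y : Fin d → ℝ) : Fin d → ℝ :=
  fun i => pd (fun z => ∑ k, z k * B z k) y i - 2 * B y i

/-- Symmetric gradient `ε(u)_{ij} = (∂_j u_i + ∂_i u_j)/2` of a vector field. -/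
def epsF {d : ℕ} (u : (Fin d → ℝ) → Fin d → ℝ) (y : Fin d → ℝ) :
    Fin d → Fin d → ℝ :=
  fun i j => (pd (fun z => u z i) y j + pd (fun z => u z j) y i) / 2

section

open Filter Topology

variable {d : ℕ} {x : Fin d → ℝ}

section PartialDerivative

variable {f g : (Fin d → ℝ) → ℝ}

theorem pd_congr (h : f =ᶠ[𝓝 x] g) (k : Fin d) : pd f x k = pd g x k := by
  rw [pd, pd, h.fderiv_eq]

theorem pd_const (c : ℝ) (k : Fin d) : pd (fun _ => c) x k = 0 := by
  simp [pd]

theorem pd_apply (i k : Fin d) : pd (fun y => y i) x k = if i = k then 1 else 0 := by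
  rw [pd, fderiv_apply differentiableAt_fun_id]
  simp [Pi.single_apply]

theorem pd_add (hf : DifferentiableAt ℝ f x) (hg : DifferentiableAt ℝ g x) (k : Fin d) :
    pd (fun y => f y + g y) x k = pd f x k + pd g x k := by
  simp [pd, fderiv_fun_add hf hg]

theorem pd_sub (hf : DifferentiableAt ℝ f x) (hg : DifferentiableAt ℝ g x) (k : Fin d) :
    pd (fun y => f y - g y) x k = pd f x k - pd g x k := by
  simp [pd, fderiv_fun_sub hf hg]

theorem pd_mul (hf : DifferentiableAt ℝ f x) (hg : DifferentiableAt ℝ g x) (k : Fin d) :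
    pd (fun y => f y * g y) x k = f x * pd g x k + g x * pd f x k := by
  simp [pd, fderiv_fun_mul hf hg]

theorem pd_const_mul (hf : DifferentiableAt ℝ f x) (c : ℝ) (k : Fin d) :
    pd (fun y => c * f y) x k = c * pd f x k := by
  simp [pd, fderiv_const_mul hf]

theorem pd_sum {ι : Type*} {s : Finset ι} {F : ι → (Fin d → ℝ) → ℝ}
    (hF : ∀ j ∈ s, DifferentiableAt ℝ (F j) x) (k : Fin d) :
    pd (fun y => ∑ j ∈ s, F j y) x k = ∑ j ∈ s, pd (F j) x k := by
  simp [pd, fderiv_fun_sum hF]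

theorem differentiableAt_sum_mul {F : (Fin d → ℝ) → Fin d → ℝ} (hF : DifferentiableAt ℝ F x) :
    DifferentiableAt ℝ (fun y => ∑ k, y k * F y k) x :=
  DifferentiableAt.fun_sum fun k _ =>
    (differentiableAt_apply k x).fun_mul (differentiableAt_pi.1 hF k)

theorem pd_sum_mul {F : (Fin d → ℝ) → Fin d → ℝ} (hF : DifferentiableAt ℝ F x) (j : Fin d) :
    pd (fun y => ∑ k, y k * F y k) x j = F x j + ∑ k, x k * pd (fun y => F y k) x j := by
  have hFk := differentiableAt_pi.1 hF
  rw [pd_sum fun k _ => (differentiableAt_apply k x).fun_mul (hFk k)]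
  simp only [pd_mul (differentiableAt_apply _ x) (hFk _), pd_apply, Finset.sum_add_distrib]
  simp [add_comm]

theorem contDiffAt_pd {m n : WithTop ℕ∞} (hf : ContDiffAt ℝ n f x) (hmn : m + 1 ≤ n)
    (k : Fin d) : ContDiffAt ℝ m (fun y => pd f y k) x :=
  (hf.fderiv_right hmn).clm_apply contDiffAt_const

theorem differentiableAt_pd (hf : ContDiffAt ℝ 2 f x) (k : Fin d) :
    DifferentiableAt ℝ (fun y => pd f y k) x :=
  (contDiffAt_pd (m := 1) hf (by norm_num) k).differentiableAt (by norm_num)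

theorem pd_pd_comm (hf : ContDiffAt ℝ 2 f x) (i j : Fin d) :
    pd (fun y => pd f y i) x j = pd (fun y => pd f y j) x i := by
  have hdf : DifferentiableAt ℝ (fderiv ℝ f) x :=
    (hf.fderiv_right (m := 1) (by norm_num)).differentiableAt (by norm_num)
  have pd_pd_eq (a b : Fin d) : pd (fun y => pd f y a) x b
      = fderiv ℝ (fderiv ℝ f) x (Pi.single b 1) (Pi.single a 1) := by
    simp only [pd]
    rw [fderiv_clm_apply hdf (differentiableAt_const _)]
    simp
  rw [pd_pd_eq, pd_pd_eq, (hf.isSymmSndFDerivAt (by simp)).eq]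

end PartialDerivative

/-- The divergence `∇·F = Σ_k ∂F_k/∂x_k` of a vector field. -/
def divergence (F : (Fin d → ℝ) → Fin d → ℝ) (y : Fin d → ℝ) : ℝ :=
  ∑ k, pd (fun z => F z k) y k

section Laplacian

variable {f g : (Fin d → ℝ) → ℝ}

theorem lap_sub (hf : ContDiffAt ℝ 2 f x) (hg : ContDiffAt ℝ 2 g x) :
    lap (fun y => f y - g y) x = lap f x - lap g x := by
  simp only [lap, ← Finset.sum_sub_distrib]
  refine Finset.sum_congr rfl fun k _ => ?_
  rw [← pd_sub (differentiableAt_pd hf k) (differentiableAt_pd hg k)]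
  refine pd_congr ?_ k
  filter_upwards [hf.eventually (by simp), hg.eventually (by simp)] with y hfy hgy
  exact pd_sub (hfy.differentiableAt (by simp)) (hgy.differentiableAt (by simp)) k

theorem lap_const_mul (hf : ContDiffAt ℝ 2 f x) (c : ℝ) :
    lap (fun y => c * f y) x = c * lap f x := by
  simp only [lap, Finset.mul_sum]
  refine Finset.sum_congr rfl fun k _ => ?_
  rw [← pd_const_mul (differentiableAt_pd hf k)]
  refine pd_congr ?_ k
  filter_upwards [hf.eventually (by simp)] with y hfy
  exact pd_const_mul (hfy.differentiableAt (by simp)) c k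

theorem contDiffAt_lap {m n : WithTop ℕ∞} (hf : ContDiffAt ℝ n f x) (hmn : m + 2 ≤ n) :
    ContDiffAt ℝ m (lap f) x :=
  ContDiffAt.sum fun k _ =>
    contDiffAt_pd (contDiffAt_pd hf (by rwa [add_assoc, one_add_one_eq_two]) k) le_rfl k

theorem lap_pd_comm (hf : ContDiffAt ℝ 3 f x) (i : Fin d) :
    lap (fun y => pd f y i) x = pd (lap f) x i := by
  have hpd (k : Fin d) : ContDiffAt ℝ 2 (fun y => pd f y k) x :=
    contDiffAt_pd hf (by norm_num) k
  have hcomm (k : Fin d) : (fun y => pd (fun z => pd f z i) y k)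
      =ᶠ[𝓝 x] fun y => pd (fun z => pd f z k) y i :=
    (hf.eventually (by simp)).mono fun y hfy => pd_pd_comm (hfy.of_le (by norm_num)) i k
  calc lap (fun y => pd f y i) x
      = ∑ k, pd (fun y => pd (fun z => pd f z k) y i) x k :=
        Finset.sum_congr rfl fun k _ => pd_congr (hcomm k) k
    _ = ∑ k, pd (fun y => pd (fun z => pd f z k) y k) x i :=
        Finset.sum_congr rfl fun k _ => pd_pd_comm (hpd k) i k
    _ = pd (lap f) x i := (pd_sum (fun k _ => differentiableAt_pd (hpd k) k) i).symm

theorem lap_sum_mul {F : (Fin d → ℝ) → Fin d → ℝ} (hF : ContDiffAt ℝ 2 F x) :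
    lap (fun y => ∑ k, y k * F y k) x
      = 2 * divergence F x + ∑ k, x k * lap (fun y => F y k) x := by
  have hFk := contDiffAt_pi.1 hF
  have hpd (j : Fin d) : DifferentiableAt ℝ (fun y k => pd (fun z => F z k) y j) x :=
    differentiableAt_pi.2 fun k => differentiableAt_pd (hFk k) j
  have hfst (j : Fin d) : (fun y => pd (fun z => ∑ k, z k * F z k) y j)
      =ᶠ[𝓝 x] fun y => F y j + ∑ k, y k * pd (fun z => F z k) y j :=
    (hF.eventually (by simp)).mono fun y hFy => pd_sum_mul (hFy.differentiableAt (by simp)) j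
  have hsnd (j : Fin d) : pd (fun y => pd (fun z => ∑ k, z k * F z k) y j) x j
      = 2 * pd (fun z => F z j) x j
        + ∑ k, x k * pd (fun y => pd (fun z => F z k) y j) x j := by
    rw [pd_congr (hfst j), pd_add ((hFk j).differentiableAt (by simp))
      (differentiableAt_sum_mul (hpd j)), pd_sum_mul (hpd j)]
    ring
  simp only [lap, divergence, hsnd, Finset.sum_add_distrib, Finset.mul_sum]
  rw [Finset.sum_comm]

end Laplacian

theorem differentiableAt_divergence {F : (Fin d → ℝ) → Fin d → ℝ} (hF : ContDiffAt ℝ 2 F x) :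
    DifferentiableAt ℝ (divergence F) x :=
  DifferentiableAt.fun_sum fun k _ => differentiableAt_pd (contDiffAt_pi.1 hF k) k

theorem differentiableAt_epsF {u : (Fin d → ℝ) → Fin d → ℝ} (hu : ContDiffAt ℝ 2 u x)
    (i j : Fin d) : DifferentiableAt ℝ (fun y => epsF u y i j) x := by
  simp only [epsF, div_eq_inv_mul]
  exact ((differentiableAt_pd (contDiffAt_pi.1 hu i) j).fun_add
    (differentiableAt_pd (contDiffAt_pi.1 hu j) i)).const_mul 2⁻¹

theorem divergence_epsF {u : (Fin d → ℝ) → Fin d → ℝ} (hu : ContDiffAt ℝ 2 u x) (i : Fin d) :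
    divergence (fun y => epsF u y i) x
      = (lap (fun y => u y i) x + pd (divergence u) x i) / 2 := by
  have huk := contDiffAt_pi.1 hu
  have hentry (j : Fin d) : pd (fun y => epsF u y i j) x j
      = 2⁻¹ * (pd (fun y => pd (fun z => u z i) y j) x j
        + pd (fun y => pd (fun z => u z j) y j) x i) := by
    have hij := differentiableAt_pd (huk i) j
    have hji := differentiableAt_pd (huk j) i
    simp only [epsF, div_eq_inv_mul]
    rw [pd_const_mul (hij.fun_add hji), pd_add hij hji, pd_pd_comm (huk j) i j]
  have hgrad : pd (divergence u) x i = ∑ j, pd (fun y => pd (fun z => u z j) y j) x i :=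
    pd_sum (fun j _ => differentiableAt_pd (huk j) j) i
  rw [hgrad, divergence, Finset.sum_congr rfl fun j _ => hentry j, ← Finset.mul_sum,
    Finset.sum_add_distrib, div_eq_inv_mul, lap]

section Neuber

variable {B : (Fin d → ℝ) → Fin d → ℝ}

theorem contDiffAt_sum_mul {n : WithTop ℕ∞} (hB : ContDiffAt ℝ n B x) :
    ContDiffAt ℝ n (fun y => ∑ k, y k * B y k) x :=
  ContDiffAt.sum fun k _ => (contDiff_apply ℝ ℝ k).contDiffAt.mul (contDiffAt_pi.1 hB k)

theorem contDiffAt_neuber {m n : WithTop ℕ∞} (hB : ContDiffAt ℝ n B x) (hmn : m + 1 ≤ n) :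
    ContDiffAt ℝ m (neuber B) x :=
  contDiffAt_pi.2 fun i => (contDiffAt_pd (contDiffAt_sum_mul hB) hmn i).sub
    (contDiffAt_const.mul ((contDiffAt_pi.1 hB i).of_le (le_self_add.trans hmn)))

theorem divergence_neuber (hB : ContDiffAt ℝ 2 B x) :
    divergence (neuber B) x = ∑ k, x k * lap (fun y => B y k) x := by
  have hentry (k : Fin d) : pd (fun y => neuber B y k) x k
      = pd (fun y => pd (fun z => ∑ j, z j * B z j) y k) x k - 2 * pd (fun y => B y k) x k := by
    have hBk := (contDiffAt_pi.1 hB k).differentiableAt (by simp)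
    rw [← pd_const_mul hBk,
      ← pd_sub (differentiableAt_pd (contDiffAt_sum_mul hB) k) (hBk.const_mul 2)]
    rfl
  calc divergence (neuber B) x
      = lap (fun y => ∑ k, y k * B y k) x - 2 * divergence B x := by
        simp only [divergence, hentry, Finset.sum_sub_distrib, Finset.mul_sum, lap]
    _ = ∑ k, x k * lap (fun y => B y k) x := by rw [lap_sum_mul hB, add_sub_cancel_left]

theorem lap_neuber (hB : ContDiffAt ℝ 3 B x) (i : Fin d) :
    lap (fun y => neuber B y i) x
      = pd (fun y => 2 * divergence B y + ∑ k, y k * lap (fun z => B z k) y) x i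
        - 2 * lap (fun y => B y i) x := by
  have hφ := contDiffAt_sum_mul hB
  have hBi : ContDiffAt ℝ 2 (fun y => B y i) x := (contDiffAt_pi.1 hB i).of_le (by norm_num)
  have hlap : lap (fun y => ∑ k, y k * B y k)
      =ᶠ[𝓝 x] fun y => 2 * divergence B y + ∑ k, y k * lap (fun z => B z k) y :=
    (hB.eventually (by simp)).mono fun y hBy => lap_sum_mul (hBy.of_le (by norm_num))
  simp only [neuber]
  rw [lap_sub (contDiffAt_pd hφ (by norm_num) i) (contDiffAt_const.mul hBi),
    lap_const_mul hBi, lap_pd_comm hφ, pd_congr hlap]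

theorem divergence_epsF_neuber (hB : ContDiffAt ℝ 3 B x) (i : Fin d) :
    divergence (fun y => epsF (neuber B) y i) x
      = pd (divergence B) x i + ∑ k, x k * pd (lap fun y => B y k) x i := by
  have hlapB : DifferentiableAt ℝ (fun y k => lap (fun z => B z k) y) x :=
    differentiableAt_pi.2 fun k =>
      (contDiffAt_lap (m := 1) (contDiffAt_pi.1 hB k) (by norm_num)).differentiableAt (by simp)
  have hdivB := differentiableAt_divergence (hB.of_le (by norm_num))
  have hdivu : divergence (neuber B) =ᶠ[𝓝 x] fun y => ∑ k, y k * lap (fun z => B z k) y :=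
    (hB.eventually (by simp)).mono fun y hBy => divergence_neuber (hBy.of_le (by norm_num))
  rw [divergence_epsF (contDiffAt_neuber hB (by norm_num)), lap_neuber hB, pd_congr hdivu,
    pd_add (hdivB.const_mul 2) (differentiableAt_sum_mul hlapB), pd_const_mul hdivB,
    pd_sum_mul hlapB]
  ring

end Neuber

end

theorem stmt_18_general {d : ℕ} {x : Fin d → ℝ} {B : (Fin d → ℝ) → Fin d → ℝ}
    (hB : ContDiffAt ℝ 3 B x) (ν : ℝ) (i : Fin d) :
    -(∑ j, pd (fun y => ν * epsF (neuber B) y i j) x j) +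
        pd (fun y => ν * ∑ k, pd (fun z => B z k) y k) x i
      = -(ν * ∑ k, x k * pd (lap fun y => B y k) x i) := by
  have hstress : ∑ j, pd (fun y => ν * epsF (neuber B) y i j) x j
      = ν * divergence (fun y => epsF (neuber B) y i) x := by
    rw [divergence, Finset.mul_sum]
    exact Finset.sum_congr rfl fun j _ =>
      pd_const_mul (differentiableAt_epsF (contDiffAt_neuber hB (by norm_num)) i j) ν j
  have hpressure : pd (fun y => ν * ∑ k, pd (fun z => B z k) y k) x i
      = ν * pd (divergence B) x i :=
    pd_const_mul (differentiableAt_divergence (hB.of_le (by norm_num))) ν i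
  rw [hstress, hpressure, divergence_epsF_neuber hB]
  ring

/-- Kellogg-type example: momentum equation: if `B` is `C³`
and componentwise harmonic on an open set `U`, `ν > 0` is constant,
`u = ∇(x·B) − 2B` and `p = ν ∇·B`, then `−∇·(ν ε(u)) + ∇p = 0` on `U`. -/
theorem stmt_18 (d : ℕ) (U : Set (Fin d → ℝ)) (hU : IsOpen U)
    (B : (Fin d → ℝ) → Fin d → ℝ) (hB : ContDiffOn ℝ 3 B U)
    (hharm : ∀ x ∈ U, ∀ i, lap (fun y => B y i) x = 0)
    (ν : ℝ) (hν : 0 < ν) :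
    ∀ x ∈ U, ∀ i,
      -(∑ j, pd (fun y => ν * epsF (neuber B) y i j) x j) +
        pd (fun y => ν * ∑ k, pd (fun z => B z k) y k) x i = 0 := by
  intro x hx i
  have hgrad (k : Fin d) : pd (lap fun y => B y k) x i = 0 :=
    (pd_congr (Filter.eventuallyEq_of_mem (hU.mem_nhds hx) (hharm · · k)) i).trans (pd_const 0 i)
  simp [stmt_18_general (hB.contDiffAt (hU.mem_nhds hx)) ν i, hgrad]
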